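/- There exist a dimension d, a d-dimensional extremal (0,1)-matrix A of order 2 with deficiency δ, and an optimal hyperplane cover Λ = (λ_{i,j}) of A such that some entry λ_{i,j} is not an integer multiple of δ (i.e., λ_{i,j}/δ ∉ ℤ). -/

import Mathlib

open Finset

/-- The sum of the entries of `k` over the hyperplane `Γ_{i,j}`. -/
def hypSum {d n : ℕ} (k : (Fin d → Fin n) → ℝ) (i : Fin d) (j : Fin n) : ℝ :=
  ∑ α ∈ Finset.univ.filter (fun α : Fin d → Fin n => α i = j), k α

/-- `k` is a polyplex of weight `W` in the `d`-dimensional (0,1)-matrix `A` of order `n`. -/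
def IsPolyplex {d n : ℕ} (A : (Fin d → Fin n) → Bool) (k : (Fin d → Fin n) → ℝ) (W : ℝ) : Prop :=
  (∀ α, 0 ≤ k α) ∧ (∀ α, A α = false → k α = 0) ∧
  (∀ i j, hypSum k i j ≤ 1) ∧ (∑ α, k α) = W

/-- `k` is a polydiagonal in `A`: a nonnegative weighting of the support whose sum over
every hyperplane equals `1`. -/
def IsPolydiagonal {d n : ℕ} (A : (Fin d → Fin n) → Bool) (k : (Fin d → Fin n) → ℝ) : Prop :=
  (∀ α, 0 ≤ k α) ∧ (∀ α, A α = false → k α = 0) ∧ (∀ i j, hypSum k i j = 1)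

def HasPolydiagonal {d n : ℕ} (A : (Fin d → Fin n) → Bool) : Prop :=
  ∃ k, IsPolydiagonal A k

/-- The matrix obtained from `A` by additionally setting the entry at `β` to `1`. -/
def addEntry {d n : ℕ} (A : (Fin d → Fin n) → Bool) (β : Fin d → Fin n) :
    (Fin d → Fin n) → Bool :=
  fun α => if α = β then true else A α

/-- `A` is extremal: it has no polydiagonal, and adding any entry creates one. -/
def IsExtremal {d n : ℕ} (A : (Fin d → Fin n) → Bool) : Prop :=
  ¬ HasPolydiagonal A ∧ ∀ β, A β = false → HasPolydiagonal (addEntry A β)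

/-- `Λ` is a hyperplane cover of `A`. -/
def IsCover {d n : ℕ} (A : (Fin d → Fin n) → Bool) (Λ : Fin d → Fin n → ℝ) : Prop :=
  (∀ i j, 0 ≤ Λ i j) ∧ ∀ α, A α = true → 1 ≤ ∑ i, Λ i (α i)

/-- The weight of a hyperplane cover. -/
def coverWeight {d n : ℕ} (Λ : Fin d → Fin n → ℝ) : ℝ := ∑ i, ∑ j, Λ i j

/-- `Λ` is an optimal hyperplane cover of `A`: a cover of minimum weight. -/
def IsOptimalCover {d n : ℕ} (A : (Fin d → Fin n) → Bool) (Λ : Fin d → Fin n → ℝ) : Prop :=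
  IsCover A Λ ∧ ∀ Λ', IsCover A Λ' → coverWeight Λ ≤ coverWeight Λ'

/-- `A` is a threshold matrix. -/
def IsThreshold {d n : ℕ} (A : (Fin d → Fin n) → Bool) : Prop :=
  ∃ Λ : Fin d → Fin n → ℝ, (∀ i j, 0 ≤ Λ i j) ∧
    ∀ α, (A α = true ↔ 1 ≤ ∑ i, Λ i (α i))

/-- `A` and `B` are equivalent: `B` is obtained from `A` by permuting directions and
permuting parallel hyperplanes, i.e. `B(α) = A(β)` where `β (π i) = σ i (α i)`. -/
def MatEquiv {d n : ℕ} (A B : (Fin d → Fin n) → Bool) : Prop :=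
  ∃ (π : Equiv.Perm (Fin d)) (σ : Fin d → Equiv.Perm (Fin n)),
    ∀ α, B α = A (fun j => σ (π.symm j) (α (π.symm j)))

/-- The rate of the hyperplane `Γ_{i,j}` of `A`: the number of ones it contains. -/
def rate {d n : ℕ} (A : (Fin d → Fin n) → Bool) (i : Fin d) (j : Fin n) : ℕ :=
  (Finset.univ.filter (fun α : Fin d → Fin n => A α = true ∧ α i = j)).card

/-- The profile of `A`: the multiset of the rates of all its `d·n` hyperplanes. -/
def profile {d n : ℕ} (A : (Fin d → Fin n) → Bool) : Multiset ℕ :=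
  (Finset.univ : Finset (Fin d × Fin n)).val.map (fun p => rate A p.1 p.2)

/-!
The weights `4, 4, 4, 6, 6, 9, 11, 1, 2` with quota `24` have the odd total `2 * 24 - 1`. Dividing
them by `24` gives a cover of weight `2 - 1 / 24 < 2`, so the threshold matrix has no polydiagonal;
it is extremal because the complement of an index below the quota reaches the quota, and the two
form a diagonal. A polyplex of weight `2 - 1 / 24` certifies that the cover is optimal.

No subset of the first seven weights sums to `22`, so the matrix does not distinguish the last two
directions, although their weights `1` and `2` differ. Exchanging these two directions thus gives a
second optimal cover, and the midpoint of both covers has the entry `(3 / 2) / 24`.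
-/

section Duality

variable {d n : ℕ} {A : (Fin d → Fin n) → Bool} {k : (Fin d → Fin n) → ℝ} {W : ℝ}
  {Λ : Fin d → Fin n → ℝ}

lemma sum_mul_sum_apply_eq_sum_mul_hypSum (k : (Fin d → Fin n) → ℝ) (Λ : Fin d → Fin n → ℝ) :
    ∑ α, k α * ∑ i, Λ i (α i) = ∑ i, ∑ j, Λ i j * hypSum k i j := by
  simp_rw [mul_sum]
  rw [sum_comm]
  refine sum_congr rfl fun i _ => ?_
  rw [← sum_fiberwise univ (fun α : Fin d → Fin n => α i)]
  refine sum_congr rfl fun j _ => ?_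
  rw [hypSum, mul_sum]
  refine sum_congr rfl fun α hα => ?_
  rw [(mem_filter.mp hα).2, mul_comm]

lemma IsPolyplex.le_coverWeight (hk : IsPolyplex A k W) (hΛ : IsCover A Λ) :
    W ≤ coverWeight Λ := by
  obtain ⟨k_nonneg, k_support, hypSum_le, rfl⟩ := hk
  obtain ⟨Λ_nonneg, one_le⟩ := hΛ
  calc ∑ α, k α ≤ ∑ α, k α * ∑ i, Λ i (α i) := by
        refine sum_le_sum fun α _ => ?_
        cases hα : A α with
        | false => simp [k_support α hα]
        | true => exact le_mul_of_one_le_right (k_nonneg α) (one_le α hα)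
    _ = ∑ i, ∑ j, Λ i j * hypSum k i j := sum_mul_sum_apply_eq_sum_mul_hypSum k Λ
    _ ≤ coverWeight Λ := sum_le_sum fun i _ => sum_le_sum fun j _ =>
        mul_le_of_le_one_right (Λ_nonneg i j) (hypSum_le i j)

lemma IsPolyplex.isGreatest (hk : IsPolyplex A k (coverWeight Λ)) (hΛ : IsCover A Λ) :
    IsGreatest {W | ∃ k, IsPolyplex A k W} (coverWeight Λ) :=
  ⟨⟨k, hk⟩, fun _ ⟨_, hk'⟩ => hk'.le_coverWeight hΛ⟩

lemma IsPolyplex.isOptimalCover (hk : IsPolyplex A k (coverWeight Λ)) (hΛ : IsCover A Λ) :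
    IsOptimalCover A Λ :=
  ⟨hΛ, fun _ hΛ' => hk.le_coverWeight hΛ'⟩

lemma sum_hypSum (k : (Fin d → Fin n) → ℝ) (i : Fin d) : ∑ j, hypSum k i j = ∑ α, k α :=
  sum_fiberwise univ (fun α : Fin d → Fin n => α i) k

lemma IsPolydiagonal.isPolyplex [NeZero d] (hk : IsPolydiagonal A k) : IsPolyplex A k n := by
  obtain ⟨k_nonneg, k_support, hypSum_eq⟩ := hk
  refine ⟨k_nonneg, k_support, fun i j => (hypSum_eq i j).le, ?_⟩
  rw [← sum_hypSum k 0]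
  simp [hypSum_eq]

lemma IsCover.not_hasPolydiagonal [NeZero d] (hΛ : IsCover A Λ) (hweight : coverWeight Λ < n) :
    ¬ HasPolydiagonal A :=
  fun ⟨_, hk⟩ => hweight.not_ge (hk.isPolyplex.le_coverWeight hΛ)

end Duality

section OptimalCovers

variable {d n : ℕ} {A : (Fin d → Fin n) → Bool} {Λ : Fin d → Fin n → ℝ}

lemma convex_setOf_isCover (A : (Fin d → Fin n) → Bool) : Convex ℝ {Λ | IsCover A Λ} := by
  intro Λ hΛ Λ' hΛ' a b ha hb hab
  refine ⟨fun i j => add_nonneg (mul_nonneg ha (hΛ.1 i j)) (mul_nonneg hb (hΛ'.1 i j)),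
    fun α hα => ?_⟩
  calc (1 : ℝ) = a * 1 + b * 1 := by rw [mul_one, mul_one, hab]
    _ ≤ a * ∑ i, Λ i (α i) + b * ∑ i, Λ' i (α i) := by
        gcongr
        exacts [hΛ.2 α hα, hΛ'.2 α hα]
    _ = ∑ i, (a • Λ + b • Λ') i (α i) := by simp [sum_add_distrib, mul_sum]

lemma coverWeight_smul_add_smul (a b : ℝ) (Λ Λ' : Fin d → Fin n → ℝ) :
    coverWeight (a • Λ + b • Λ') = a * coverWeight Λ + b * coverWeight Λ' := by
  simp [coverWeight, sum_add_distrib, mul_sum]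

lemma convex_setOf_isOptimalCover (A : (Fin d → Fin n) → Bool) :
    Convex ℝ {Λ | IsOptimalCover A Λ} := by
  intro Λ hΛ Λ' hΛ' a b ha hb hab
  refine ⟨convex_setOf_isCover A hΛ.1 hΛ'.1 ha hb hab, fun Λ'' hΛ'' => ?_⟩
  calc coverWeight (a • Λ + b • Λ') = a * coverWeight Λ + b * coverWeight Λ' :=
        coverWeight_smul_add_smul a b Λ Λ'
    _ ≤ a * coverWeight Λ'' + b * coverWeight Λ'' := by
        gcongr
        exacts [hΛ.2 Λ'' hΛ'', hΛ'.2 Λ'' hΛ'']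
    _ = coverWeight Λ'' := by rw [← add_mul, hab, one_mul]

lemma coverWeight_comp_perm (π : Equiv.Perm (Fin d)) (Λ : Fin d → Fin n → ℝ) :
    coverWeight (Λ ∘ π) = coverWeight Λ :=
  Equiv.sum_comp π fun i => ∑ j, Λ i j

lemma IsOptimalCover.comp_perm (hΛ : IsOptimalCover A Λ) (π : Equiv.Perm (Fin d))
    (hA : ∀ α, A (α ∘ π.symm) = A α) : IsOptimalCover A (Λ ∘ π) := by
  refine ⟨⟨fun i j => hΛ.1.1 (π i) j, fun α hα => ?_⟩, fun Λ' hΛ' => ?_⟩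
  · calc (1 : ℝ) ≤ ∑ i, Λ i (α (π.symm i)) := hΛ.1.2 (α ∘ π.symm) ((hA α).trans hα)
      _ = ∑ i, Λ (π i) (α i) := by
          rw [← Equiv.sum_comp π]
          simp only [Equiv.symm_apply_apply]
  · exact (coverWeight_comp_perm π Λ).trans_le (hΛ.2 Λ' hΛ')

end OptimalCovers

section PointMasses

/-- The weighting of indices that places mass `y t` at each point `p t`; masses at coinciding points
add up. It presents polyplexes and polydiagonals by listing their supports. -/
noncomputable def pointMasses {ι : Type*} [Fintype ι] {d n : ℕ} (p : ι → Fin d → Fin n)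
    (y : ι → ℝ) : (Fin d → Fin n) → ℝ :=
  ∑ t, Pi.single (p t) (y t)

variable {ι : Type*} [Fintype ι] {d n : ℕ} {A : (Fin d → Fin n) → Bool} {p : ι → Fin d → Fin n}
  {y : ι → ℝ}

lemma pointMasses_apply (p : ι → Fin d → Fin n) (y : ι → ℝ) (α : Fin d → Fin n) :
    pointMasses p y α = ∑ t, if α = p t then y t else 0 := by
  simp [pointMasses, Pi.single_apply]

lemma pointMasses_nonneg (hy : ∀ t, 0 ≤ y t) (α : Fin d → Fin n) : 0 ≤ pointMasses p y α := by
  rw [pointMasses_apply]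
  exact sum_nonneg fun t _ => by split_ifs <;> simp [hy t]

lemma pointMasses_eq_zero (hp : ∀ t, A (p t) = true) (α : Fin d → Fin n) (hα : A α = false) :
    pointMasses p y α = 0 := by
  rw [pointMasses_apply]
  refine sum_eq_zero fun t _ => if_neg ?_
  rintro rfl
  simp [hp t] at hα

lemma sum_pointMasses (p : ι → Fin d → Fin n) (y : ι → ℝ) :
    ∑ α, pointMasses p y α = ∑ t, y t := by
  simp_rw [pointMasses_apply]
  rw [sum_comm]
  simp

lemma hypSum_pointMasses (p : ι → Fin d → Fin n) (y : ι → ℝ) (i : Fin d) (j : Fin n) :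
    hypSum (pointMasses p y) i j = ∑ t with p t i = j, y t := by
  simp_rw [hypSum, pointMasses_apply]
  rw [sum_comm, sum_filter]
  simp

lemma isPolyplex_pointMasses (hp : ∀ t, A (p t) = true) (hy : ∀ t, 0 ≤ y t)
    (hle : ∀ i j, ∑ t with p t i = j, y t ≤ 1) :
    IsPolyplex A (pointMasses p y) (∑ t, y t) :=
  ⟨pointMasses_nonneg hy, pointMasses_eq_zero hp,
    fun i j => (hypSum_pointMasses p y i j).trans_le (hle i j), sum_pointMasses p y⟩

lemma isPolydiagonal_pointMasses_one (hp : ∀ t, A (p t) = true)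
    (hbij : ∀ i, Function.Bijective fun t => p t i) :
    IsPolydiagonal A (pointMasses p 1) := by
  refine ⟨pointMasses_nonneg fun _ => zero_le_one, pointMasses_eq_zero hp, fun i j => ?_⟩
  obtain ⟨t, ht, huniq⟩ := (hbij i).existsUnique j
  have hfiber : univ.filter (fun s => p s i = j) = {t} := by
    ext s
    simpa using ⟨huniq s, fun hs => hs ▸ ht⟩
  rw [hypSum_pointMasses, hfiber, sum_singleton, Pi.one_apply]

end PointMasses

section Threshold

/-- The total weight of the coordinates of `α`, where the coordinate `α i` counts `α i` times the
weight `w i`; in order 2 this is the sum of `w` over the set with characteristic function `α`. -/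
def indexWeight {d n : ℕ} (w : Fin d → ℕ) (α : Fin d → Fin n) : ℕ := ∑ i, w i * (α i : ℕ)

/-- The threshold matrix with weights `w` and quota `q`: its support is the set of indices of weight
at least `q`. -/
def thresholdMatrix {d n : ℕ} (w : Fin d → ℕ) (q : ℕ) (α : Fin d → Fin n) : Bool :=
  decide (q ≤ indexWeight w α)

/-- The hyperplane cover of the threshold matrix obtained by dividing the weights by the quota. -/
noncomputable def thresholdCover {d n : ℕ} (w : Fin d → ℕ) (q : ℕ) (i : Fin d) (j : Fin n) : ℝ :=
  (w i * (j : ℕ) : ℝ) / q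

variable {d n : ℕ} {w : Fin d → ℕ} {q : ℕ}

lemma sum_thresholdCover_apply (w : Fin d → ℕ) (q : ℕ) (α : Fin d → Fin n) :
    ∑ i, thresholdCover w q i (α i) = (indexWeight w α : ℝ) / q := by
  simp [thresholdCover, indexWeight, sum_div]

lemma isCover_thresholdCover (hq : 0 < q) :
    IsCover (thresholdMatrix (n := n) w q) (thresholdCover w q) := by
  refine ⟨fun i j => by unfold thresholdCover; positivity, fun α hα => ?_⟩
  rw [sum_thresholdCover_apply, one_le_div (by positivity)]
  exact_mod_cast of_decide_eq_true hα

lemma coverWeight_thresholdCover_of_order_two (w : Fin d → ℕ) (q : ℕ) :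
    coverWeight (thresholdCover (n := 2) w q) = (∑ i, w i : ℕ) / q := by
  simp [coverWeight, thresholdCover, sum_div]

lemma coverWeight_thresholdCover_eq_two_sub (hw : ∑ i, w i + 1 = 2 * q) :
    coverWeight (thresholdCover (n := 2) w q) = 2 - 1 / q := by
  have hq : (q : ℝ) ≠ 0 := by
    norm_cast
    lia
  have hw' : ((∑ i, w i : ℕ) : ℝ) + 1 = 2 * q := by exact_mod_cast hw
  rw [coverWeight_thresholdCover_of_order_two]
  field_simp
  linarith

lemma indexWeight_add_indexWeight_rev (w : Fin d → ℕ) (α : Fin d → Fin 2) :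
    indexWeight w α + indexWeight w (Fin.rev ∘ α) = ∑ i, w i := by
  have val_add_val_rev : ∀ j : Fin 2, (j : ℕ) + (j.rev : ℕ) = 1 := by decide
  simp only [indexWeight, Function.comp_apply, ← sum_add_distrib, ← mul_add, val_add_val_rev,
    mul_one]

lemma hasPolydiagonal_of_complementary_pair {A : (Fin d → Fin 2) → Bool} {β : Fin d → Fin 2}
    (hβ : A β = true) (hrev : A (Fin.rev ∘ β) = true) : HasPolydiagonal A := by
  refine ⟨_, isPolydiagonal_pointMasses_one (p := ![β, Fin.rev ∘ β])
    (Fin.forall_fin_two.mpr ⟨hβ, hrev⟩) fun i => ?_⟩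
  have pair_bijective : ∀ b : Fin 2, Function.Bijective ![b, b.rev] := by decide
  convert pair_bijective (β i) using 1
  ext t
  fin_cases t <;> rfl

lemma isExtremal_thresholdMatrix (hw : ∑ i, w i + 1 = 2 * q) :
    IsExtremal (thresholdMatrix (n := 2) w q) := by
  have hq : 0 < q := by lia
  have : NeZero d := ⟨by rintro rfl; rw [Fin.sum_univ_zero] at hw; lia⟩
  refine ⟨(isCover_thresholdCover hq).not_hasPolydiagonal ?_, fun β hβ => ?_⟩
  · rw [coverWeight_thresholdCover_eq_two_sub hw]
    exact sub_lt_self _ (by positivity)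
  · have hrev : thresholdMatrix w q (Fin.rev ∘ β) = true := by
      have hlt : indexWeight w β < q := not_le.mp (of_decide_eq_false hβ)
      have hsum := indexWeight_add_indexWeight_rev w β
      exact decide_eq_true (by lia)
    exact hasPolydiagonal_of_complementary_pair (β := β) (by simp [addEntry])
      (by simp [addEntry, hrev])

end Threshold

namespace FractionalCover

/-- The weights of the example. -/
def weights : Fin 9 → ℕ := ![4, 4, 4, 6, 6, 9, 11, 1, 2]

/-- The extremal matrix of the example. -/
def matrix : (Fin 9 → Fin 2) → Bool := thresholdMatrix weights 24

/-- An optimal cover of `matrix` all of whose entries are integer multiples of `1 / 24`. -/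
noncomputable def integralCover : Fin 9 → Fin 2 → ℝ := thresholdCover weights 24

/-- The optimal cover of `matrix` halfway between `integralCover` and its image under the symmetry
of `matrix` exchanging the last two directions. -/
noncomputable def fractionalCover : Fin 9 → Fin 2 → ℝ :=
  midpoint ℝ integralCover (integralCover ∘ Equiv.swap 7 8)

/-- The support of an optimal polyplex. By complementary slackness its points have weight exactly
`24`, both before and after exchanging the last two weights. -/
def points : Fin 8 → Fin 9 → Fin 2 :=
  ![![1, 0, 0, 1, 0, 0, 1, 1, 1],
    ![0, 1, 0, 0, 1, 0, 1, 1, 1],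
    ![1, 0, 0, 0, 0, 1, 1, 0, 0],
    ![0, 1, 0, 0, 0, 1, 1, 0, 0],
    ![0, 0, 1, 0, 0, 1, 1, 0, 0],
    ![1, 1, 1, 1, 1, 0, 0, 0, 0],
    ![0, 0, 0, 1, 1, 1, 0, 1, 1],
    ![1, 1, 1, 0, 0, 1, 0, 1, 1]]

/-- The masses of the optimal polyplex at `points`, multiplied by `24`. They solve the linear system
which says that every hyperplane `Γ_{i,1}` has sum exactly `1`. -/
def masses : Fin 8 → ℕ := ![6, 6, 2, 2, 8, 11, 7, 5]

lemma sum_weights_add_one : ∑ i, weights i + 1 = 2 * 24 := by decide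

lemma isExtremal_matrix : IsExtremal matrix := isExtremal_thresholdMatrix sum_weights_add_one

lemma isCover_integralCover : IsCover matrix integralCover := isCover_thresholdCover (by norm_num)

lemma coverWeight_integralCover : coverWeight integralCover = 2 - 1 / 24 :=
  coverWeight_thresholdCover_eq_two_sub sum_weights_add_one

lemma matrix_points (t : Fin 8) : matrix (points t) = true := by
  revert t
  decide

lemma sum_masses_le (i : Fin 9) (j : Fin 2) : ∑ t with points t i = j, masses t ≤ 24 := by
  revert i j
  decide

lemma isPolyplex_points_masses :
    IsPolyplex matrix (pointMasses points fun t => (masses t : ℝ) / 24)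
      (coverWeight integralCover) := by
  have sum_masses : ∑ t, masses t = ∑ i, weights i := by decide
  rw [integralCover, coverWeight_thresholdCover_of_order_two, ← sum_masses, Nat.cast_sum, sum_div]
  refine isPolyplex_pointMasses matrix_points (fun t => by positivity) fun i j => ?_
  rw [← sum_div, div_le_one (by norm_num)]
  exact_mod_cast sum_masses_le i j

lemma isGreatest_polyplex_weight : IsGreatest {W | ∃ k, IsPolyplex matrix k W} (2 - 1 / 24) :=
  coverWeight_integralCover ▸ isPolyplex_points_masses.isGreatest isCover_integralCover

lemma indexWeight_weights (α : Fin 9 → Fin 2) :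
    indexWeight weights α = 4 * (α 0 : ℕ) + 4 * α 1 + 4 * α 2 + 6 * α 3 + 6 * α 4 + 9 * α 5
      + 11 * α 6 + 1 * α 7 + 2 * α 8 := by
  rw [indexWeight, Fin.sum_univ_castSucc, Fin.sum_univ_eight]
  rfl

lemma matrix_comp_swap (α : Fin 9 → Fin 2) : matrix (α ∘ Equiv.swap 7 8) = matrix α := by
  have hbit (i : Fin 9) : (α i : ℕ) ≤ 1 := Fin.is_le (α i)
  set s := 4 * (α 0 : ℕ) + 4 * α 1 + 4 * α 2 + 6 * α 3 + 6 * α 4 + 9 * α 5 + 11 * α 6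
  have subset_sum_ne : s ≠ 22 := by
    have := hbit 0; have := hbit 1; have := hbit 2; have := hbit 3; have := hbit 4
    have := hbit 5; have := hbit 6
    lia
  have weight_eq : indexWeight weights α = s + 1 * α 7 + 2 * α 8 := indexWeight_weights α
  have weight_swap_eq : indexWeight weights (α ∘ Equiv.swap 7 8) = s + 1 * α 8 + 2 * α 7 :=
    indexWeight_weights (α ∘ Equiv.swap 7 8)
  have := hbit 7; have := hbit 8
  exact decide_eq_decide.mpr (by lia)

lemma isOptimalCover_fractionalCover : IsOptimalCover matrix fractionalCover := by
  have hΛ : IsOptimalCover matrix integralCover :=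
    isPolyplex_points_masses.isOptimalCover isCover_integralCover
  exact (convex_setOf_isOptimalCover matrix).midpoint_mem hΛ
    (hΛ.comp_perm (Equiv.swap 7 8) matrix_comp_swap)

lemma fractionalCover_seven_one : fractionalCover 7 1 = 3 / 2 * (1 / 24) := by
  have seven : integralCover 7 1 = 1 / 24 := by simp [integralCover, thresholdCover, weights]
  have eight : integralCover 8 1 = 2 / 24 := by simp [integralCover, thresholdCover, weights]
  calc fractionalCover 7 1 = midpoint ℝ (integralCover 7 1) (integralCover 8 1) := rfl
    _ = 3 / 2 * (1 / 24) := by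
      rw [seven, eight, midpoint_eq_smul_add, smul_eq_mul]
      norm_num

lemma fractionalCover_seven_one_ne_int_mul (m : ℤ) : fractionalCover 7 1 ≠ m * (1 / 24) := by
  rw [fractionalCover_seven_one]
  intro hm
  have two_mul_eq : 2 * (m : ℝ) = 3 := by linarith
  norm_cast at two_mul_eq
  lia

end FractionalCover

/-- There is an extremal matrix of order 2 with deficiency δ having an optimal hyperplane
cover some entry of which is not an integer multiple of δ. -/
theorem stmt_9 :
    ∃ (d : ℕ) (A : (Fin d → Fin 2) → Bool) (δ : ℝ) (Λ : Fin d → Fin 2 → ℝ),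
      IsExtremal A ∧ IsGreatest {W | ∃ k, IsPolyplex A k W} (2 - δ) ∧
      IsOptimalCover A Λ ∧ ∃ i j, ¬ ∃ m : ℤ, Λ i j = (m : ℝ) * δ := by
  open FractionalCover in
  exact ⟨9, matrix, 1 / 24, fractionalCover, isExtremal_matrix, isGreatest_polyplex_weight,
    isOptimalCover_fractionalCover, 7, 1,
    fun ⟨m, hm⟩ => fractionalCover_seven_one_ne_int_mul m hm⟩
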